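/- Let K be an algebraically closed field of characteristic 0 and let f and g be nonconstant, relatively prime polynomials in K[t]. Let A, B ∈ K[t] satisfy either (A, B) = (f² − g², 2fg) or (A, B) = (2fg, f² − g²), and set C = f² + g². Let w ∈ K[t] be a nonconstant polynomial, and suppose deg A ≤ deg B and deg B = deg C. Then (wA)³ + wB ≠ (wC)². -/

import Mathlib

/-!
Cancelling one factor `w` turns the equation `(wA)³ + wB = (wC)²` into `w²A³ + B = wC²`, whose
leading terms give `2 deg B = deg w + 3 deg A`. Multiplying it by `1` and the relation
`A² + B² = C²` by `w` and subtracting gives `B(wB - 1) = A²(w²A - w)`. The factor `C + B` of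
`A² = (C + B)(C - B)` is coprime to `B`, so it divides `wB - 1`, hence also
`w(C + B) - 2(wB - 1) = w(C - B) + 2`, and therefore `2 deg (C + B) ≤ deg w + 2 deg A`. The sign of
`C` may be chosen so that `deg B ≤ deg (C + B)`, and the two estimates leave only `deg A = 0`,
which forces `deg w = 0`.
-/

open Polynomial

section CommRing

variable {R : Type*} [CommRing R]

theorem isCoprime_sq_sub_sq_two_mul_mul {f g : R} (h2 : IsUnit (2 : R)) (hfg : IsCoprime f g) :
    IsCoprime (f ^ 2 - g ^ 2) (2 * f * g) := by
  have coprime_f : IsCoprime (f ^ 2 - g ^ 2) f := by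
    convert hfg.symm.pow_left (m := 2) |>.neg_left.add_mul_left_left f using 1
    ring
  have coprime_g : IsCoprime (f ^ 2 - g ^ 2) g := by
    convert hfg.pow_left (m := 2) |>.add_mul_left_left (-g) using 1
    ring
  rw [mul_assoc, isCoprime_mul_unit_left_right h2]
  exact coprime_f.mul_right coprime_g

theorem add_dvd_sq_of_sq_add_sq_eq_sq {A B C : R} (hABC : A ^ 2 + B ^ 2 = C ^ 2) :
    C + B ∣ A ^ 2 :=
  ⟨C - B, by linear_combination hABC⟩

theorem add_dvd_mul_sub_add_two {w A B C : R} (hAB : IsCoprime A B)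
    (hABC : A ^ 2 + B ^ 2 = C ^ 2) (h : w ^ 2 * A ^ 3 + B = w * C ^ 2) :
    C + B ∣ w * (C - B) + 2 := by
  have dvd_sq : C + B ∣ A ^ 2 := add_dvd_sq_of_sq_add_sq_eq_sq hABC
  have coprime_B : IsCoprime (C + B) B := hAB.pow_left.of_isCoprime_of_dvd_left dvd_sq
  have key : B * (w * B - 1) = A ^ 2 * (w ^ 2 * A - w) := by
    linear_combination w * hABC - h
  have dvd_sub_one : C + B ∣ w * B - 1 :=
    coprime_B.dvd_of_dvd_mul_left (key ▸ dvd_sq.mul_right _)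
  have decomposition : w * (C - B) + 2 = (C + B) * w - (w * B - 1) * 2 := by ring
  exact decomposition ▸ dvd_sub (dvd_mul_right _ _) (dvd_sub_one.mul_right _)

end CommRing

section NoZeroDivisors

variable {R : Type*} [CommRing R] [NoZeroDivisors R]

theorem natDegree_le_max_natDegree_add_neg_add [NeZero (2 : R)] (B C : R[X]) :
    B.natDegree ≤ max (C + B).natDegree (-C + B).natDegree :=
  calc
    B.natDegree = (Polynomial.C 2 * B).natDegree := (natDegree_C_mul (NeZero.ne (2 : R))).symm
    _ = ((C + B) + (-C + B)).natDegree := by rw [C_ofNat]; ring_nf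
    _ ≤ max (C + B).natDegree (-C + B).natDegree := natDegree_add_le _ _

theorem two_mul_natDegree_le_of_dvd_mul_add {P Q w r : R[X]} (hP : P ≠ 0) (hQ : Q ≠ 0)
    (hr : r.natDegree < w.natDegree) (hdvd : P ∣ w * Q + r) :
    2 * P.natDegree ≤ w.natDegree + (P * Q).natDegree := by
  have hw : w ≠ 0 := ne_zero_of_natDegree_gt hr
  have degree_wQ : (w * Q).natDegree = w.natDegree + Q.natDegree := natDegree_mul hw hQ
  have degree_sum : (w * Q + r).natDegree = w.natDegree + Q.natDegree := by
    rw [natDegree_add_eq_left_of_natDegree_lt (by omega), degree_wQ]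
  have sum_ne_zero : w * Q + r ≠ 0 := ne_zero_of_natDegree_gt (n := 0) (by omega)
  have degree_P_le := natDegree_le_of_dvd hdvd sum_ne_zero
  rw [natDegree_mul hP hQ]
  omega

theorem two_mul_natDegree_eq_of_sq_mul_cube_add_eq {w A B C : R[X]} (hw : 0 < w.natDegree)
    (hA : A ≠ 0) (hBC : B.natDegree = C.natDegree) (h : w ^ 2 * A ^ 3 + B = w * C ^ 2) :
    2 * B.natDegree = w.natDegree + 3 * A.natDegree := by
  have hw0 : w ≠ 0 := ne_zero_of_natDegree_gt hw
  have degree_wA : (w ^ 2 * A ^ 3).natDegree = 2 * w.natDegree + 3 * A.natDegree := by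
    rw [natDegree_mul (pow_ne_zero _ hw0) (pow_ne_zero _ hA), natDegree_pow, natDegree_pow]
  have hC : C ≠ 0 := by
    rintro rfl
    have : w ^ 2 * A ^ 3 = -B := by linear_combination h
    rw [this, natDegree_neg, hBC, natDegree_zero] at degree_wA
    omega
  have degree_wC : (w * C ^ 2).natDegree = w.natDegree + 2 * C.natDegree := by
    rw [natDegree_mul hw0 (pow_ne_zero _ hC), natDegree_pow]
  have degree_eq : (w ^ 2 * A ^ 3).natDegree = (w * C ^ 2).natDegree := by
    rw [eq_sub_of_add_eq h, natDegree_sub_eq_left_of_natDegree_lt (by omega)]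
  omega

theorem ne_zero_of_isCoprime_of_sq_mul_cube_add_eq {w A B C : R[X]} (hw : 0 < w.natDegree)
    (hAB : IsCoprime A B) (h : w ^ 2 * A ^ 3 + B = w * C ^ 2) : A ≠ 0 := by
  rintro rfl
  have w_dvd_B : w ∣ B := ⟨C ^ 2, by linear_combination h⟩
  have w_isUnit : IsUnit w := isUnit_of_dvd_unit w_dvd_B (isCoprime_zero_left.mp hAB)
  exact hw.ne' (natDegree_eq_zero_of_isUnit w_isUnit)

theorem jesmanowicz_poly_lem_3_1_2_general [NeZero (2 : R)] {w A B C : R[X]}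
    (hw : 0 < w.natDegree) (hAB : IsCoprime A B) (hABC : A ^ 2 + B ^ 2 = C ^ 2)
    (hBC : B.natDegree = C.natDegree) :
    (w * A) ^ 3 + w * B ≠ (w * C) ^ 2 := by
  intro h
  wlog hB : B.natDegree ≤ (C + B).natDegree generalizing C
  · have hB' : B.natDegree ≤ (-C + B).natDegree :=
      (le_max_iff.mp (natDegree_le_max_natDegree_add_neg_add B C)).resolve_left hB
    exact this (by rwa [neg_sq]) (by rwa [natDegree_neg]) (by rwa [mul_neg, neg_sq]) hB'
  have h_cancel : w ^ 2 * A ^ 3 + B = w * C ^ 2 :=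
    mul_left_cancel₀ (ne_zero_of_natDegree_gt hw) (by linear_combination h)
  have hA : A ≠ 0 := ne_zero_of_isCoprime_of_sq_mul_cube_add_eq hw hAB h_cancel
  have factorization : (C + B) * (C - B) = A ^ 2 := by linear_combination -hABC
  have factors_ne_zero : C + B ≠ 0 ∧ C - B ≠ 0 :=
    mul_ne_zero_iff.mp (factorization ▸ pow_ne_zero 2 hA)
  have degree_B := two_mul_natDegree_eq_of_sq_mul_cube_add_eq hw hA hBC h_cancel
  have degree_factor_le := two_mul_natDegree_le_of_dvd_mul_add factors_ne_zero.1 factors_ne_zero.2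
    (by rwa [natDegree_ofNat]) (add_dvd_mul_sub_add_two hAB hABC h_cancel)
  have degree_factor_le_sq :=
    natDegree_le_of_dvd (add_dvd_sq_of_sq_add_sq_eq_sq hABC) (pow_ne_zero 2 hA)
  rw [factorization] at degree_factor_le
  rw [natDegree_pow] at degree_factor_le degree_factor_le_sq
  omega

end NoZeroDivisors

theorem jesmanowicz_poly_lem_3_1_2
    {K : Type*} [Field K] [CharZero K] [IsAlgClosed K]
    (f g w A B : K[X])
    (hf : 0 < f.natDegree) (hg : 0 < g.natDegree)
    (hfg : IsCoprime f g) (hw : 0 < w.natDegree)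
    (hAB : (A = f ^ 2 - g ^ 2 ∧ B = 2 * f * g) ∨ (A = 2 * f * g ∧ B = f ^ 2 - g ^ 2))
    (hdAB : A.natDegree ≤ B.natDegree)
    (hdBC : B.natDegree = (f ^ 2 + g ^ 2).natDegree) :
    (w * A) ^ 3 + w * B ≠ (w * (f ^ 2 + g ^ 2)) ^ 2 := by
  have coprime : IsCoprime (f ^ 2 - g ^ 2) (2 * f * g) :=
    isCoprime_sq_sub_sq_two_mul_mul (isUnit_C.mpr (IsUnit.mk0 2 two_ne_zero)) hfg
  rcases hAB with ⟨rfl, rfl⟩ | ⟨rfl, rfl⟩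
  · exact jesmanowicz_poly_lem_3_1_2_general hw coprime (by ring) hdBC
  · exact jesmanowicz_poly_lem_3_1_2_general hw coprime.symm (by ring) hdBC
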